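/- Let the spider lower bound hold in the following quantitative form: if T is a tree containing a vertex v of degree Δ whose neighbors v_1, …, v_Δ each have degree Δ, and T admits a star edge coloring with Δ + k colors, then k ≥ (Δ−1)/2, i.e., Δ(Δ−1)/2 + kΔ ≥ Δ(Δ−1); consequently every star edge coloring of T uses at least ⌊3Δ/2⌋ colors. -/

import Mathlib

/-- A star edge coloring of a simple graph with `k` colors: edges sharing an
endpoint receive distinct colors, and on every path with exactly 4 edges
(a walk of length 4 whose five vertices are pairwise distinct) and on every
cycle of length 4, at least three distinct colors appear among the four edges. -/
def IsStarEdgeColoring {V : Type*} {k : ℕ} (G : SimpleGraph V)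
    (c : Sym2 V → Fin k) : Prop :=
  (∀ u v w : V, G.Adj u v → G.Adj u w → v ≠ w → c s(u, v) ≠ c s(u, w)) ∧
  (∀ v₀ v₁ v₂ v₃ v₄ : V,
    G.Adj v₀ v₁ → G.Adj v₁ v₂ → G.Adj v₂ v₃ → G.Adj v₃ v₄ →
    ([v₀, v₁, v₂, v₃, v₄].Pairwise (· ≠ ·) ∨
      (v₀ = v₄ ∧ [v₀, v₁, v₂, v₃].Pairwise (· ≠ ·))) →
    3 ≤ ({c s(v₀, v₁), c s(v₁, v₂), c s(v₂, v₃), c s(v₃, v₄)} : Finset (Fin k)).card)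

/-- The star chromatic index of a graph: the least `k` such that `G` admits a
star edge coloring with `k` colors. -/
noncomputable def starChromaticIndex {V : Type*} (G : SimpleGraph V) : ℕ :=
  sInf {k : ℕ | ∃ c : Sym2 V → Fin k, IsStarEdgeColoring G c}

/-!
Write `d` for the degree of `v`. Relate a neighbor `u` of `v` to a neighbor `u'` when the color of
`vu'` occurs at `u`. If distinct `u` and `u'` were related both ways, a walk `w u v u' w'` would
alternate between two colors; so the relation is antisymmetric and has at most `d (d + 1) / 2`
pairs. On the other hand, with `n` colors available, the palettes of `u` and `v` share at least
`deg u + d - n` colors, so each `u` is related to at least that many `u'`. Comparing the two counts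
gives `2 deg u + d ≤ 2 n + 1` for a neighbor `u` of least degree.
-/

open Finset

theorem sum_card_filter_le_choose_two_of_antisymm {α : Type*} (s : Finset α) (r : α → α → Prop)
    [DecidableRel r] (hr : ∀ a ∈ s, ∀ b ∈ s, r a b → r b a → a = b) :
    ∑ a ∈ s, #{b ∈ s | r a b} ≤ (#s + 1).choose 2 := by
  rw [← card_sigma, ← card_sym2]
  refine card_le_card_of_injOn (fun p ↦ s(p.1, p.2)) ?_ ?_
  · rintro ⟨a, b⟩ hab
    simp only [coe_sigma, Set.mem_sigma_iff, mem_coe, mem_filter] at hab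
    exact mk_mem_sym2_iff.2 ⟨hab.1, hab.2.1⟩
  · rintro ⟨a, b⟩ hab ⟨a', b'⟩ hab' heq
    simp only [coe_sigma, Set.mem_sigma_iff, mem_coe, mem_filter] at hab hab'
    obtain ⟨rfl, rfl⟩ | ⟨rfl, rfl⟩ := Sym2.eq_iff.1 heq
    · rfl
    · obtain rfl := hr a hab.1 b hab.2.1 hab.2.2 hab'.2.2
      rfl

section Palette

variable {V α : Type*} [DecidableEq α] (G : SimpleGraph V) (c : Sym2 V → α)

/-- The palette of a vertex `u` under an edge coloring `c`, that is, the set of colors of the edges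
at `u`. The coloring assigns colors to all pairs of vertices; only those of edges of `G` count. -/
def palette (u : V) [Fintype (G.neighborSet u)] : Finset α :=
  (G.neighborFinset u).image fun w ↦ c s(u, w)

variable {G c}

theorem mem_palette {u : V} [Fintype (G.neighborSet u)] {a : α} :
    a ∈ palette G c u ↔ ∃ w, G.Adj u w ∧ c s(u, w) = a := by
  simp only [palette, mem_image, SimpleGraph.mem_neighborFinset]

theorem card_palette_inter_le (u v : V) [Fintype (G.neighborSet u)] [Fintype (G.neighborSet v)] :
    #(palette G c u ∩ palette G c v) ≤
      #{w ∈ G.neighborFinset v | c s(v, w) ∈ palette G c u} := by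
  have himage : palette G c u ∩ palette G c v =
      {w ∈ G.neighborFinset v | c s(v, w) ∈ palette G c u}.image fun w ↦ c s(v, w) := by
    rw [inter_comm, ← filter_mem_eq_inter]
    exact filter_image
  exact himage ▸ card_image_le

end Palette

namespace IsStarEdgeColoring

variable {V : Type*} {G : SimpleGraph V} {n : ℕ} {c : Sym2 V → Fin n}

theorem eq_of_color_eq (hc : IsStarEdgeColoring G c) {u v w : V} (huv : G.Adj u v)
    (huw : G.Adj u w) (h : c s(u, v) = c s(u, w)) : v = w :=
  by_contra fun hne ↦ hc.1 u v w huv huw hne h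

theorem color_eq_of_alternating (hc : IsStarEdgeColoring G c) {v₀ v₁ v₂ v₃ v₄ : V}
    (h₀₁ : G.Adj v₀ v₁) (h₁₂ : G.Adj v₁ v₂) (h₂₃ : G.Adj v₂ v₃) (h₃₄ : G.Adj v₃ v₄)
    (hodd : c s(v₀, v₁) = c s(v₂, v₃)) (heven : c s(v₁, v₂) = c s(v₃, v₄)) :
    c s(v₀, v₁) = c s(v₁, v₂) := by
  by_contra hne
  have h₀₂ : v₀ ≠ v₂ := by
    rintro rfl
    exact hne (congrArg c Sym2.eq_swap)
  have h₁₃ : v₁ ≠ v₃ := by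
    rintro rfl
    exact hne (hodd.trans (congrArg c Sym2.eq_swap))
  have h₂₄ : v₂ ≠ v₄ := by
    rintro rfl
    exact hne (hodd.trans ((congrArg c Sym2.eq_swap).trans heven.symm))
  have h₀₃ : v₀ ≠ v₃ := by
    rintro rfl
    exact h₁₂.ne (hc.eq_of_color_eq h₀₁ h₂₃.symm (hodd.trans (congrArg c Sym2.eq_swap)))
  have h₁₄ : v₁ ≠ v₄ := by
    rintro rfl
    exact h₂₃.ne (hc.eq_of_color_eq h₁₂ h₃₄.symm (heven.trans (congrArg c Sym2.eq_swap)))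
  have hpath_or_cycle : [v₀, v₁, v₂, v₃, v₄].Pairwise (· ≠ ·) ∨
      (v₀ = v₄ ∧ [v₀, v₁, v₂, v₃].Pairwise (· ≠ ·)) := by
    by_cases h₀₄ : v₀ = v₄
    · exact .inr ⟨h₀₄, by simp [h₀₁.ne, h₀₂, h₀₃, h₁₂.ne, h₁₃, h₂₃.ne]⟩
    · exact .inl (by
        simp [h₀₁.ne, h₀₂, h₀₃, h₀₄, h₁₂.ne, h₁₃, h₁₄, h₂₃.ne, h₂₄, h₃₄.ne])
  have hthree := hc.2 v₀ v₁ v₂ v₃ v₄ h₀₁ h₁₂ h₂₃ h₃₄ hpath_or_cycle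
  have htwo : ({c s(v₀, v₁), c s(v₁, v₂), c s(v₂, v₃), c s(v₃, v₄)} : Finset (Fin n)) =
      {c s(v₀, v₁), c s(v₁, v₂)} := by
    grind
  exact absurd (htwo ▸ hthree) (not_le.2 (Nat.lt_succ_of_le card_le_two))

theorem card_palette (hc : IsStarEdgeColoring G c) (u : V) [Fintype (G.neighborSet u)] :
    #(palette G c u) = G.degree u := by
  refine card_image_of_injOn fun v hv w hw h ↦ ?_
  exact hc.eq_of_color_eq ((G.mem_neighborFinset u v).1 hv) ((G.mem_neighborFinset u w).1 hw) h

theorem eq_of_color_mem_palette (hc : IsStarEdgeColoring G c) {v u u' : V}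
    [Fintype (G.neighborSet u)] [Fintype (G.neighborSet u')] (hu : G.Adj v u) (hu' : G.Adj v u')
    (h : c s(v, u') ∈ palette G c u) (h' : c s(v, u) ∈ palette G c u') : u = u' := by
  obtain ⟨w, huw, hw⟩ := mem_palette.1 h
  obtain ⟨w', huw', hw'⟩ := mem_palette.1 h'
  rw [Sym2.eq_swap] at hw
  have halt : c s(w, u) = c s(u, v) :=
    hc.color_eq_of_alternating huw.symm hu.symm hu' huw' hw
      ((congrArg c Sym2.eq_swap).trans hw'.symm)
  exact hc.eq_of_color_eq hu hu' ((congrArg c Sym2.eq_swap).trans (halt.symm.trans hw))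

theorem degree_add_degree_le (hc : IsStarEdgeColoring G c) (u v : V)
    [Fintype (G.neighborSet u)] [Fintype (G.neighborSet v)] :
    G.degree u + G.degree v ≤
      n + #{w ∈ G.neighborFinset v | c s(v, w) ∈ palette G c u} :=
  calc G.degree u + G.degree v
      = #(palette G c u ∪ palette G c v) + #(palette G c u ∩ palette G c v) := by
        rw [card_union_add_card_inter, hc.card_palette, hc.card_palette]
    _ ≤ n + #{w ∈ G.neighborFinset v | c s(v, w) ∈ palette G c u} :=
        add_le_add (card_finset_fin_le _) (card_palette_inter_le u v)

theorem degree_mul_le [G.LocallyFinite] (hc : IsStarEdgeColoring G c) {v : V} {d : ℕ}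
    (hd : ∀ u, G.Adj v u → d ≤ G.degree u) :
    G.degree v * (d + G.degree v) ≤ G.degree v * n + (G.degree v + 1).choose 2 :=
  calc G.degree v * (d + G.degree v)
      = ∑ _u ∈ G.neighborFinset v, (d + G.degree v) := by
        rw [sum_const, G.card_neighborFinset_eq_degree, smul_eq_mul]
    _ ≤ ∑ u ∈ G.neighborFinset v,
          (n + #{w ∈ G.neighborFinset v | c s(v, w) ∈ palette G c u}) :=
        sum_le_sum fun u hu ↦
          (Nat.add_le_add_right (hd u ((G.mem_neighborFinset v u).1 hu)) _).trans
            (hc.degree_add_degree_le u v)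
    _ = G.degree v * n + ∑ u ∈ G.neighborFinset v,
          #{w ∈ G.neighborFinset v | c s(v, w) ∈ palette G c u} := by
        rw [sum_add_distrib, sum_const, G.card_neighborFinset_eq_degree, smul_eq_mul]
    _ ≤ G.degree v * n + (G.degree v + 1).choose 2 := by
        rw [← G.card_neighborFinset_eq_degree v]
        refine Nat.add_le_add_left (sum_card_filter_le_choose_two_of_antisymm _ _ ?_) _
        intro u hu u' hu'
        rw [G.mem_neighborFinset] at hu hu'
        exact hc.eq_of_color_mem_palette hu hu'

theorem two_mul_add_degree_le [G.LocallyFinite] (hc : IsStarEdgeColoring G c) {v : V} {d : ℕ}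
    (hv : 0 < G.degree v) (hd : ∀ u, G.Adj v u → d ≤ G.degree u) :
    2 * d + G.degree v ≤ 2 * n + 1 := by
  have hcount := hc.degree_mul_le hd
  have hchoose : (G.degree v + 1) * G.degree v = (G.degree v + 1).choose 2 * 2 := by
    simpa only [Nat.choose_one_right] using Nat.add_one_mul_choose_eq (G.degree v) 1
  have hmul : G.degree v * (2 * d + G.degree v) ≤ G.degree v * (2 * n + 1) := by linarith
  exact Nat.le_of_mul_le_mul_left hmul hv

end IsStarEdgeColoring

theorem spider_lower_bound_general {V : Type*} (G : SimpleGraph V) [G.LocallyFinite]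
    (v : V) (Δ k : ℕ) (hv : Δ ≤ G.degree v) (hnb : ∀ u : V, G.Adj v u → Δ ≤ G.degree u)
    (hcol : ∃ c : Sym2 V → Fin (Δ + k), IsStarEdgeColoring G c) :
    Δ * (Δ - 1) ≤ Δ * (Δ - 1) / 2 + k * Δ ∧
    Δ - 1 ≤ 2 * k ∧
    3 * Δ / 2 ≤ Δ + k := by
  obtain ⟨c, hc⟩ := hcol
  have hk : Δ - 1 ≤ 2 * k := by
    obtain rfl | hΔ := Nat.eq_zero_or_pos Δ
    · exact Nat.zero_le _
    · have := hc.two_mul_add_degree_le (hΔ.trans_le hv) hnb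
      omega
  have hmul : Δ * (Δ - 1) ≤ 2 * (k * Δ) :=
    calc Δ * (Δ - 1) ≤ Δ * (2 * k) := Nat.mul_le_mul_left Δ hk
      _ = 2 * (k * Δ) := by ring
  exact ⟨by omega, hk, by omega⟩

/-- Quantitative spider lower bound: if a finite tree has a vertex `v` of
degree `Δ` all of whose neighbors also have degree `Δ`, and the tree admits a
star edge coloring with `Δ + k` colors, then `Δ(Δ-1)/2 + kΔ ≥ Δ(Δ-1)`, hence
`k ≥ (Δ-1)/2`, and consequently every star edge coloring of the tree uses at
least `⌊3Δ/2⌋` colors. -/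
theorem spider_lower_bound {V : Type*} [Fintype V]
    (G : SimpleGraph V) [DecidableRel G.Adj]
    (hconn : G.Connected) (hacyc : G.IsAcyclic)
    (v : V) (Δ k : ℕ) (hv : G.degree v = Δ)
    (hnb : ∀ u : V, G.Adj v u → G.degree u = Δ)
    (hcol : ∃ c : Sym2 V → Fin (Δ + k), IsStarEdgeColoring G c) :
    Δ * (Δ - 1) ≤ Δ * (Δ - 1) / 2 + k * Δ ∧
    Δ - 1 ≤ 2 * k ∧
    3 * Δ / 2 ≤ Δ + k :=
  spider_lower_bound_general G v Δ k hv.ge (fun u hu ↦ (hnb u hu).ge) hcol
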